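/- Let R be a φ-IF ring (a φ-ring in which every nonnil-injective R-module is φ-flat). Then R is nonnil-coherent. -/

import Mathlib

open CategoryTheory

universe u

/-- A commutative ring is a `φ`-ring if its nilradical is a divided prime ideal. -/
def IsPhiRing (R : Type u) [CommRing R] : Prop :=
  (nilradical R).IsPrime ∧ ∀ x : R, x ∉ nilradical R → nilradical R ≤ Ideal.span {x}

/-- A ring is nonnil-coherent if every finitely generated nonnil ideal is
finitely presented as a module. -/
def IsNonnilCoherent (R : Type u) [CommRing R] : Prop :=
  ∀ I : Ideal R, I.FG → ¬ I ≤ nilradical R → Module.FinitePresentation R I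

/-- A module is φ-torsion if every element is annihilated by a nonnil ideal. -/
def IsPhiTorsion (R : Type u) [CommRing R] (T : Type u) [AddCommGroup T] [Module R T] : Prop :=
  ∀ t : T, ∃ I : Ideal R, ¬ I ≤ nilradical R ∧ ∀ a ∈ I, a • t = 0

/-- A module `M` is φ-flat if `Tor₁ᴿ(T, M) = 0` for every φ-torsion module `T`. -/
def IsPhiFlat (R : Type u) [CommRing R] (M : Type u) [AddCommGroup M] [Module R M] : Prop :=
  ∀ (T : Type u) [AddCommGroup T] [Module R T], IsPhiTorsion R T →
    Subsingleton (((Tor (ModuleCat.{u} R) 1).obj (ModuleCat.of R T)).obj (ModuleCat.of R M))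

/-- A module `M` is nonnil-injective if `Ext¹ᴿ(T, M) = 0` for every φ-torsion module `T`. -/
def IsNonnilInjective (R : Type u) [CommRing R] (M : Type u) [AddCommGroup M] [Module R M] :
    Prop :=
  ∀ (T : Type u) [AddCommGroup T] [Module R T], IsPhiTorsion R T →
    Subsingleton (((Ext R (ModuleCat.{u} R) 1).obj (Opposite.op (ModuleCat.of R T))).obj
      (ModuleCat.of R M))

/-- A module `M` is nonnil-FP-injective if `Ext¹ᴿ(T, M) = 0` for every finitely
presented φ-torsion module `T`. -/
def IsNonnilFPInjective (R : Type u) [CommRing R] (M : Type u) [AddCommGroup M] [Module R M] :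
    Prop :=
  ∀ (T : Type u) [AddCommGroup T] [Module R T], Module.FinitePresentation R T →
    IsPhiTorsion R T →
    Subsingleton (((Ext R (ModuleCat.{u} R) 1).obj (Opposite.op (ModuleCat.of R T))).obj
      (ModuleCat.of R M))

/-!
Write `M⁺` for the character module of `M`. If `Tor₁(T, M) = 0` then `Ext¹(T, M⁺) = 0`, so the
character module of a `φ`-flat module is nonnil-injective. Starting from the `φ`-flat module `R`,
the IF hypothesis makes `R⁺` `φ`-flat, hence `R⁺⁺` and all its powers `(R⁺⁺)^X` nonnil-injective,
hence these powers `φ`-flat as well. For a nonnil ideal `I` the module `R ⧸ I` is `φ`-torsion, so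
`I ⊗ (R⁺⁺)^X → (R⁺⁺)^X` is injective, and so is `I ⊗ (R⁺⁺)^X → (I ⊗ R⁺⁺)^X`. Since `R → R⁺⁺` is
pure, the injectivity of these maps for all `X` forces a finitely generated `I` to be finitely
presented, as in Chase's theorem on products of flat modules.
-/

section Tensor

variable {R : Type*} [CommRing R]

/-- A linear map is pure if every finite linear system over `R` with constants in the source that
is solvable in the target is already solvable in the source; this is Cohn's equational form of
universal injectivity. -/
def IsPureMap {A B : Type*} [AddCommGroup A] [AddCommGroup B] [Module R A] [Module R B]
    (f : A →ₗ[R] B) : Prop :=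
  ∀ ⦃m n : ℕ⦄ (c : Fin m → Fin n → R) (a : Fin m → A) (y : Fin n → B),
    (∀ i, f (a i) = ∑ j, c i j • y j) → ∃ x : Fin n → A, ∀ i, a i = ∑ j, c i j • x j

section CharacterModule

variable {A B : Type*} [AddCommGroup A] [AddCommGroup B] [Module R A] [Module R B]

variable (R A) in
/-- The canonical map from a module to its double character module, evaluating characters. -/
def bidualEval : A →ₗ[R] CharacterModule (CharacterModule A) where
  toFun a := AddMonoidHom.eval a
  map_add' a b := by ext χ; exact map_add χ a b
  map_smul' _ _ := rfl

lemma bidualEval_apply (a : A) (χ : CharacterModule A) : bidualEval R A a χ = χ a := rfl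

-- A character of `B ⧸ range f` that is nonzero at `b` pulls back to one killing `range f`.
lemma mem_range_of_bidualEval_mem_range {f : A →ₗ[R] B} {b : B}
    (h : bidualEval R B b ∈ (CharacterModule.dual (CharacterModule.dual f)).range) :
    b ∈ f.range := by
  obtain ⟨ξ, hξ⟩ := h
  rw [← Submodule.Quotient.mk_eq_zero]
  refine CharacterModule.eq_zero_of_character_apply fun χ ↦ ?_
  let χ' := CharacterModule.dual f.range.mkQ χ
  have hχ' : CharacterModule.dual f χ' = 0 := by
    rw [← LinearMap.comp_apply, ← CharacterModule.dual_comp, LinearMap.range_mkQ_comp,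
      CharacterModule.dual_zero, LinearMap.zero_apply]
  calc χ' b = ξ (CharacterModule.dual f χ') := (DFunLike.congr_fun hξ χ').symm
    _ = 0 := by rw [hχ', map_zero]

lemma characterModule_sum_apply {ι : Type*} (s : Finset ι) (χ : ι → CharacterModule A) (a : A) :
    (∑ i ∈ s, χ i) a = ∑ i ∈ s, χ i a :=
  map_sum (bidualEval ℤ A a) χ s

theorem isPureMap_bidualEval : IsPureMap (bidualEval R A) := by
  intro m n c a y hy
  let f : (Fin n → A) →ₗ[R] (Fin m → A) := LinearMap.pi fun i ↦ ∑ j, c i j • LinearMap.proj j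
  suffices a ∈ f.range by
    obtain ⟨x, rfl⟩ := this
    exact ⟨x, fun i ↦ by simp [f]⟩
  let coord (k : ℕ) (i : Fin k) : CharacterModule (Fin k → A) →ₗ[R] CharacterModule A :=
    CharacterModule.dual (LinearMap.single R (fun _ ↦ A) i)
  have hf (χ : CharacterModule (Fin m → A)) (j : Fin n) :
      coord n j (CharacterModule.dual f χ) = ∑ i, c i j • coord m i χ := by
    ext t
    have hft : f (Pi.single j t) = ∑ i, Pi.single i (c i j • t) := by
      ext i; simp [f, Pi.single_apply, Finset.sum_apply]
    simp only [characterModule_sum_apply, CharacterModule.smul_apply]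
    exact (congrArg χ hft).trans (map_sum χ _ _)
  refine mem_range_of_bidualEval_mem_range ⟨∑ j, CharacterModule.dual (coord n j) (y j), ?_⟩
  ext χ
  rw [map_sum, characterModule_sum_apply]
  calc ∑ j, y j (coord n j (CharacterModule.dual f χ))
    _ = ∑ j, ∑ i, (c i j • y j) (coord m i χ) := by
      simp only [hf, map_sum, CharacterModule.smul_apply]
    _ = ∑ i, bidualEval R A (a i) (coord m i χ) := by
      rw [Finset.sum_comm]; simp only [hy, characterModule_sum_apply]
    _ = ∑ i, χ (Pi.single i (a i)) := rfl
    _ = bidualEval R _ a χ := by rw [← map_sum, Finset.univ_sum_single, bidualEval_apply]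

end CharacterModule

section PureMap

open TensorProduct

-- The coordinates of the relation module `K` of the generators form a tautological
-- element of `M ⊗ N ^ K`; the equational criterion turns its vanishing into generators of `K`.
theorem finitePresentation_of_injective_piRightHom {R : Type u} [CommRing R] {M N : Type*}
    [AddCommGroup M] [AddCommGroup N] [Module R M] [Module R N] [Module.Finite R M]
    {e : R →ₗ[R] N} (he : IsPureMap e)
    (h : ∀ X : Type u, Function.Injective (piRightHom R R M fun _ : X ↦ N)) :
    Module.FinitePresentation R M := by
  obtain ⟨n, m, hm⟩ :=
    Submodule.fg_iff_exists_fin_generating_family.1 (Module.Finite.fg_top (R := R) (M := M))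
  let l : (Fin n → R) →ₗ[R] M := Fintype.linearCombination R m
  have hl : Function.Surjective l := by
    rw [← LinearMap.range_eq_top, Fintype.range_linearCombination, hm]
  refine Module.finitePresentation_of_surjective l hl ?_
  have htaut : ∑ i, m i ⊗ₜ[R] (fun k : l.ker ↦ e (k.1 i)) = 0 := by
    refine h l.ker ?_
    ext k
    have hk : ∑ i, k.1 i • m i = 0 := k.2
    have he_one (r : R) : e r = r • e 1 := by rw [← map_smul, smul_eq_mul, mul_one]
    simp only [map_sum, piRightHom_tmul, Finset.sum_apply, map_zero, Pi.zero_apply]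
    simp_rw [he_one (k.1 _), ← smul_tmul, ← sum_tmul, hk, zero_tmul]
  obtain ⟨q, c, y, hy, hc⟩ := vanishesTrivially_of_sum_tmul_eq_zero R hm htaut
  suffices l.ker = Submodule.span R (Set.range fun j i ↦ c i j) from
    this ▸ Submodule.fg_span (Set.finite_range _)
  refine le_antisymm (fun k hk ↦ ?_) (Submodule.span_le.2 ?_)
  · obtain ⟨x, hx⟩ := he c k (fun j ↦ y j ⟨k, hk⟩) fun i ↦ by
      simpa using congrFun (hy i) ⟨k, hk⟩
    rw [Submodule.mem_span_range_iff_exists_fun]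
    exact ⟨x, by ext i; simp [hx i, mul_comm]⟩
  · rintro _ ⟨j, rfl⟩
    exact hc j

lemma piRightHom_injective_of_rTensor_subtype_injective {I : Ideal R} {X : Type*} {N : X → Type*}
    [∀ k, AddCommGroup (N k)] [∀ k, Module R (N k)]
    (h : Function.Injective (I.subtype.rTensor (∀ k, N k))) :
    Function.Injective (piRightHom R R I N) := by
  have hcomm (k : X) : LinearMap.proj k ∘ₗ (TensorProduct.lid R (∀ k, N k)).toLinearMap ∘ₗ
      I.subtype.rTensor (∀ k, N k) = (TensorProduct.lid R (N k)).toLinearMap ∘ₗ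
      I.subtype.rTensor (N k) ∘ₗ LinearMap.proj k ∘ₗ piRightHom R R I N := by
    ext; simp
  rw [injective_iff_map_eq_zero]
  intro t ht
  apply h.eq_iff' (map_zero _) |>.1
  apply (TensorProduct.lid R _).map_eq_zero_iff.1
  ext k
  simpa [ht] using LinearMap.congr_fun (hcomm k) t

end PureMap

section Exact

open TensorProduct

variable {L G T K F M : Type*} [AddCommGroup L] [AddCommGroup G] [AddCommGroup T]
  [AddCommGroup K] [AddCommGroup F] [AddCommGroup M] [Module R L] [Module R G] [Module R T]
  [Module R K] [Module R F] [Module R M]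

lemma lTensor_rTensor_apply (f : L →ₗ[R] G) (g : K →ₗ[R] F) (x : L ⊗[R] K) :
    g.lTensor G (f.rTensor K x) = f.rTensor F (g.lTensor L x) := by
  rw [← LinearMap.comp_apply, ← LinearMap.comp_apply, LinearMap.lTensor_comp_rTensor,
    LinearMap.rTensor_comp_lTensor]

lemma lTensor_subtype_range_injective_of_exact {E : Type*} [AddCommGroup E] [Module R E]
    {d₂ : E →ₗ[R] K} {d₁ : K →ₗ[R] F} (h : d₁ ∘ₗ d₂ = 0)
    (hT : Function.Exact (d₂.lTensor T) (d₁.lTensor T)) :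
    Function.Injective (d₁.range.subtype.lTensor T) := by
  have hd : d₁.rangeRestrict ∘ₗ d₂ = 0 := by
    ext x; exact LinearMap.congr_fun h x
  rw [injective_iff_map_eq_zero]
  intro x hx
  obtain ⟨w, rfl⟩ := LinearMap.lTensor_surjective T d₁.surjective_rangeRestrict x
  rw [← LinearMap.lTensor_comp_apply] at hx
  obtain ⟨u, rfl⟩ := (hT w).1 hx
  rw [← LinearMap.lTensor_comp_apply, hd, LinearMap.lTensor_zero, LinearMap.zero_apply]

-- The snake chase relating `ker (i ⊗ M)` to `ker (T ⊗ j)`, i.e. the symmetry of `Tor₁(T, M)`.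
theorem rTensor_injective_of_lTensor_injective {i : L →ₗ[R] G} {q : G →ₗ[R] T} {j : K →ₗ[R] F}
    {p : F →ₗ[R] M} (hiq : Function.Exact i q) (hq : Function.Surjective q)
    (hjp : Function.Exact j p) (hp : Function.Surjective p)
    (hi : Function.Injective (i.rTensor F)) (hj : Function.Injective (j.lTensor T)) :
    Function.Injective (i.rTensor M) := by
  rw [injective_iff_map_eq_zero]
  intro x hx
  obtain ⟨y, rfl⟩ := LinearMap.lTensor_surjective L hp x
  obtain ⟨z, hz⟩ : ∃ z, j.lTensor G z = i.rTensor F y :=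
    (lTensor_exact G hjp hp _).1 <| by rw [lTensor_rTensor_apply, hx]
  have hqz : q.rTensor K z = 0 := hj <| by
    rw [lTensor_rTensor_apply, hz, map_zero, (rTensor_exact F hiq hq).apply_apply_eq_zero]
  obtain ⟨v, rfl⟩ := (rTensor_exact K hiq hq z).1 hqz
  obtain rfl : j.lTensor L v = y := hi <| by rw [← lTensor_rTensor_apply, hz]
  exact (lTensor_exact L hjp hp).apply_apply_eq_zero v

end Exact

end Tensor

section TorExt

variable {R : Type u} [CommRing R] {T M : Type u} [AddCommGroup T] [AddCommGroup M] [Module R T]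
  [Module R M]

theorem subsingleton_tor_one_iff (P : ProjectiveResolution (ModuleCat.of R M)) :
    Subsingleton (((Tor (ModuleCat.{u} R) 1).obj (ModuleCat.of R T)).obj (ModuleCat.of R M)) ↔
      Function.Exact ((P.complex.d 2 1).hom.lTensor T) ((P.complex.d 1 0).hom.lTensor T) := by
  refine (ModuleCat.isZero_of_iff_subsingleton (R := R)).symm.trans ?_
  refine (P.isoLeftDerivedObj ((MonoidalCategory.tensoringLeft (ModuleCat.{u} R)).obj
    (ModuleCat.of R T)) 1).isZero_iff.trans ?_
  refine (HomologicalComplex.exactAt_iff_isZero_homology _ _).symm.trans ?_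
  rw [HomologicalComplex.exactAt_iff' _ 2 1 0 (by simp) (by simp)]
  exact ShortComplex.ShortExact.moduleCat_exact_iff_function_exact _

theorem subsingleton_ext_one_iff (P : ProjectiveResolution (ModuleCat.of R T)) :
    Subsingleton (((Ext R (ModuleCat.{u} R) 1).obj (Opposite.op (ModuleCat.of R T))).obj
      (ModuleCat.of R M)) ↔
      Function.Exact ((P.complex.d 1 0).hom.lcomp R M) ((P.complex.d 2 1).hom.lcomp R M) := by
  refine (ModuleCat.isZero_of_iff_subsingleton (R := R)).symm.trans ?_
  refine (P.isoExt (R := R) 1 (ModuleCat.of R M)).isZero_iff.trans ?_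
  rw [← HomologicalComplex.exactAt_iff_isZero_homology,
    HomologicalComplex.exactAt_iff' _ 0 1 2 (by simp) (by simp),
    ShortComplex.ShortExact.moduleCat_exact_iff_function_exact]
  exact (Function.Exact.iff_of_ladder_linearEquiv (e₁ := ModuleCat.homLinearEquiv (S := R))
    (e₂ := ModuleCat.homLinearEquiv (S := R)) (e₃ := ModuleCat.homLinearEquiv (S := R))
    rfl rfl).symm

lemma exists_exact_range_subtype_surjective (P : ProjectiveResolution (ModuleCat.of R M)) :
    ∃ p : P.complex.X 0 →ₗ[R] M,
      Function.Exact (P.complex.d 1 0).hom.range.subtype p ∧ Function.Surjective p := by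
  let p : P.complex.X 0 →ₗ[R] M := (P.π.f 0).hom
  have hdp : Function.Exact (P.complex.d 1 0).hom p :=
    (ShortComplex.ShortExact.moduleCat_exact_iff_function_exact _).1 P.exact₀
  exact ⟨p, LinearMap.exact_iff.2 (hdp.linearMap_ker_eq.trans (Submodule.range_subtype _).symm),
    (ModuleCat.epi_iff_surjective (P.π.f 0)).1 inferInstance⟩

lemma hom_d_comp_hom_d {ι : Type*} {c : ComplexShape ι}
    (C : HomologicalComplex (ModuleCat.{u} R) c) (i j k : ι) :
    (C.d j k).hom ∘ₗ (C.d i j).hom = 0 := by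
  rw [← ModuleCat.hom_comp, C.d_comp_d, ModuleCat.hom_zero]

theorem rTensor_injective_of_subsingleton_tor_one {L G : Type u} [AddCommGroup L] [AddCommGroup G]
    [Module R L] [Module R G] {i : L →ₗ[R] G} {q : G →ₗ[R] T} (hi : Function.Injective i)
    (hiq : Function.Exact i q) (hq : Function.Surjective q)
    (h : Subsingleton
      (((Tor (ModuleCat.{u} R) 1).obj (ModuleCat.of R T)).obj (ModuleCat.of R M))) :
    Function.Injective (i.rTensor M) := by
  let P := ProjectiveResolution.of (ModuleCat.of R M)
  have : Module.Projective R (P.complex.X 0) :=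
    (IsProjective.iff_projective _).2 (P.projective 0)
  obtain ⟨p, hdp, hp⟩ := exists_exact_range_subtype_surjective P
  exact rTensor_injective_of_lTensor_injective hiq hq hdp hp
    (Module.Flat.rTensor_preserves_injective_linearMap i hi)
    (lTensor_subtype_range_injective_of_exact (hom_d_comp_hom_d P.complex 2 1 0)
      ((subsingleton_tor_one_iff P).1 h))

theorem subsingleton_ext_one_characterModule
    (h : Subsingleton
      (((Tor (ModuleCat.{u} R) 1).obj (ModuleCat.of R T)).obj (ModuleCat.of R M))) :
    Subsingleton (((Ext R (ModuleCat.{u} R) 1).obj (Opposite.op (ModuleCat.of R T))).obj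
      (ModuleCat.of R (CharacterModule M))) := by
  let P := ProjectiveResolution.of (ModuleCat.of R T)
  let d := (P.complex.d 1 0).hom
  obtain ⟨p, hdp, hp⟩ := exists_exact_range_subtype_surjective P
  have hinj : Function.Injective (d.range.subtype.rTensor M) :=
    rTensor_injective_of_subsingleton_tor_one d.range.subtype_injective hdp hp h
  have hd : Function.Exact (P.complex.d 2 1).hom d :=
    (ShortComplex.ShortExact.moduleCat_exact_iff_function_exact _).1 (P.exact_succ 0)
  have hd' : Function.Exact (P.complex.d 2 1).hom d.rangeRestrict :=
    LinearMap.exact_iff.2 (d.ker_rangeRestrict.trans hd.linearMap_ker_eq)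
  rw [subsingleton_ext_one_iff P]
  intro f
  rw [LinearMap.exact_lcomp_of_exact_of_surjective (CharacterModule M) hd'
    d.surjective_rangeRestrict f]
  refine ⟨?_, ?_⟩
  · rintro ⟨g, rfl⟩
    obtain ⟨g', rfl⟩ := rTensor_injective_iff_lcomp_surjective.1 hinj g
    exact ⟨g', rfl⟩
  · rintro ⟨g, rfl⟩
    exact ⟨g ∘ₗ d.range.subtype, rfl⟩

theorem subsingleton_ext_one_pi {X : Type u} {N : X → Type u} [∀ k, AddCommGroup (N k)]
    [∀ k, Module R (N k)]
    (h : ∀ k, Subsingleton (((Ext R (ModuleCat.{u} R) 1).obj (Opposite.op (ModuleCat.of R T))).obj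
      (ModuleCat.of R (N k)))) :
    Subsingleton (((Ext R (ModuleCat.{u} R) 1).obj (Opposite.op (ModuleCat.of R T))).obj
      (ModuleCat.of R (∀ k, N k))) := by
  let P := ProjectiveResolution.of (ModuleCat.of R T)
  simp_rw [subsingleton_ext_one_iff P] at h ⊢
  intro f
  refine ⟨fun hf ↦ ?_, ?_⟩
  · have hg (k : X) : ∃ g : P.complex.X 0 →ₗ[R] N k,
        g ∘ₗ (P.complex.d 1 0).hom = LinearMap.proj k ∘ₗ f :=
      (h k _).1 <| by
        rw [LinearMap.lcomp_apply', LinearMap.comp_assoc]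
        exact (congrArg (LinearMap.proj k ∘ₗ ·) hf).trans (LinearMap.comp_zero _)
    choose g hg using hg
    exact ⟨LinearMap.pi g, LinearMap.ext fun x ↦ funext fun k ↦ LinearMap.congr_fun (hg k) x⟩
  · rintro ⟨g, rfl⟩
    rw [LinearMap.lcomp_apply', LinearMap.lcomp_apply', LinearMap.comp_assoc,
      hom_d_comp_hom_d, LinearMap.comp_zero]

end TorExt

section NonnilInjective

variable {R : Type u} [CommRing R] {M : Type u} [AddCommGroup M] [Module R M]

lemma isPhiTorsion_quotient {I : Ideal R} (hI : ¬ I ≤ nilradical R) : IsPhiTorsion R (R ⧸ I) := by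
  refine fun t ↦ ⟨I, hI, fun a ha ↦ ?_⟩
  obtain ⟨r, rfl⟩ := Ideal.Quotient.mk_surjective t
  rw [Algebra.smul_def, Ideal.Quotient.algebraMap_eq, Ideal.Quotient.eq_zero_iff_mem.2 ha, zero_mul]

variable (R M) in
lemma isPhiFlat_of_projective [Module.Projective R M] : IsPhiFlat R M := fun T _ _ _ ↦
  have : Projective (ModuleCat.of R M) := (IsProjective.iff_projective M).1 inferInstance
  ModuleCat.subsingleton_of_isZero <|
    isZero_Tor_succ_of_projective _ (ModuleCat.of R T) (ModuleCat.of R M) 0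

lemma IsPhiFlat.isNonnilInjective_characterModule (h : IsPhiFlat R M) :
    IsNonnilInjective R (CharacterModule M) := fun T _ _ hT ↦
  subsingleton_ext_one_characterModule (h T hT)

lemma IsNonnilInjective.pi {X : Type u} {N : X → Type u} [∀ k, AddCommGroup (N k)]
    [∀ k, Module R (N k)] (h : ∀ k, IsNonnilInjective R (N k)) :
    IsNonnilInjective R (∀ k, N k) := fun T _ _ hT ↦
  subsingleton_ext_one_pi fun k ↦ h k T hT

lemma IsPhiFlat.rTensor_subtype_injective (h : IsPhiFlat R M) {I : Ideal R}
    (hI : ¬ I ≤ nilradical R) : Function.Injective (I.subtype.rTensor M) :=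
  rTensor_injective_of_subsingleton_tor_one I.subtype_injective
    (LinearMap.exact_subtype_mkQ I) I.mkQ_surjective (h (R ⧸ I) (isPhiTorsion_quotient hI))

end NonnilInjective

theorem nonnilCoherent_of_phiIF_general (R : Type u) [CommRing R]
    (hIF : ∀ (M : Type u) [AddCommGroup M] [Module R M],
      IsNonnilInjective R M → IsPhiFlat R M) :
    IsNonnilCoherent R := by
  intro I hI_fg hI_nonnil
  have : Module.Finite R I := Module.Finite.iff_fg.2 hI_fg
  have hflat : IsPhiFlat R (CharacterModule R) :=
    hIF _ (isPhiFlat_of_projective R R).isNonnilInjective_characterModule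
  have hpow (X : Type u) : IsPhiFlat R (X → CharacterModule (CharacterModule R)) :=
    hIF _ (IsNonnilInjective.pi fun _ ↦ hflat.isNonnilInjective_characterModule)
  exact finitePresentation_of_injective_piRightHom isPureMap_bidualEval fun X ↦
    piRightHom_injective_of_rTensor_subtype_injective
      ((hpow X).rTensor_subtype_injective hI_nonnil)

/-- A φ-IF ring (a φ-ring in which every nonnil-injective module is
φ-flat) is nonnil-coherent. -/
theorem nonnilCoherent_of_phiIF (R : Type u) [CommRing R] (hR : IsPhiRing R)
    (hIF : ∀ (M : Type u) [AddCommGroup M] [Module R M],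
      IsNonnilInjective R M → IsPhiFlat R M) :
    IsNonnilCoherent R :=
  nonnilCoherent_of_phiIF_general R hIF
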